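/- arXiv:2307.08913 — 2 statements merged into one kernel-verified Lean document; each statement's English description precedes it below -/
import Mathlib

section
/- Let d, m ≥ 1 and let L ∈ ℝ^{d×d} be an invertible matrix. Let 𝒮 be a family of subsets of D = {1,…,d} satisfying the non-trivial feature condition: for every j ∈ D, ⋃_{S∈𝒮, j∉S} S = D \ {j}. Suppose that for each S ∈ 𝒮 there is a probability measure μ_S on the space of real m×d matrices such that (i) μ_S-almost every W has all columns outside S equal to zero, (ii) for every nonzero vector u ∈ ℝ^d with supp(u) ⊆ S, μ_S({W : Wu = 0}) = 0, and (iii) μ_S-almost surely ‖WL‖_{2,0} ≤ ‖W‖_{2,0}. Then L is a scaled permutation matrix, i.e., L = ΛP for some invertible diagonal matrix Λ and permutation matrix P; equivalently, every row and every column of L contains exactly one nonzero entry. -/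
/-!
Write `N S` for the set of columns `k` of `L` having a nonzero entry in some row `j ∈ S`. For
`k ∈ N S`, the `k`-th column of `W * L` is `W` applied to the nonzero restriction of `L_{:,k}`
to `S`, so it is almost surely nonzero; sparsity then gives `|N S| ≤ |S|`
(`card_touched_le`). Since `det L ≠ 0`, some permutation `σ` has `L j (σ j) ≠ 0` for all `j`
(`exists_perm_ne_zero`), so `σ S ⊆ N S` and hence `N S = σ S` by counting. If `L j (σ i) ≠ 0`
with `i ≠ j`, the covering condition provides `S ∈ 𝒮` with `j ∈ S` and `i ∉ S`, contradicting
`σ i ∈ N S = σ S`. Thus row `j` of `L` is supported at `σ j` only.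
-/

open MeasureTheory
open scoped Classical

/-- Measurable space structure on real matrices, as a (double) product of copies of `ℝ`. -/
instance matrixMeasurableSpace {m k : ℕ} : MeasurableSpace (Matrix (Fin m) (Fin k) ℝ) :=
  MeasurableSpace.pi

/-- The `L_{2,0}` "norm" of a matrix: the number of nonzero columns. -/
noncomputable def matrixL20 {m d : ℕ} (W : Matrix (Fin m) (Fin d) ℝ) : ℕ :=
  (Finset.univ.filter fun j : Fin d => ∃ i : Fin m, W i j ≠ 0).card

/-- An invertible matrix has a nonzero term in its Leibniz expansion. -/
lemma exists_perm_ne_zero {d : ℕ} (L : Matrix (Fin d) (Fin d) ℝ) (hL : IsUnit L) :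
    ∃ σ : Equiv.Perm (Fin d), ∀ j, L j (σ j) ≠ 0 := by
  have hdet : L.transpose.det ≠ 0 := by
    rw [Matrix.det_transpose]
    exact ((Matrix.isUnit_iff_isUnit_det L).1 hL).ne_zero
  rw [Matrix.det_apply] at hdet
  obtain ⟨σ, -, hσ⟩ := Finset.exists_ne_zero_of_sum_ne_zero hdet
  refine ⟨σ, fun j hj => hσ ?_⟩
  rw [Finset.prod_eq_zero (Finset.mem_univ j) (by simpa using hj), smul_zero]

/-- The rows of `L` indexed by `S` jointly meet at most `|S|` columns. -/
lemma card_touched_le {d m : ℕ} (L : Matrix (Fin d) (Fin d) ℝ) (S : Finset (Fin d))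
    (μ : Measure (Matrix (Fin m) (Fin d) ℝ)) [IsProbabilityMeasure μ]
    (hsupp : ∀ᵐ W ∂μ, ∀ j ∉ S, ∀ i : Fin m, W i j = 0)
    (hvar : ∀ u : Fin d → ℝ, u ≠ 0 → Function.support u ⊆ ↑S →
      μ {W : Matrix (Fin m) (Fin d) ℝ | W.mulVec u = 0} = 0)
    (hsparse : ∀ᵐ W ∂μ, matrixL20 (W * L) ≤ matrixL20 W) :
    (Finset.univ.filter fun k : Fin d => ∃ j ∈ S, L j k ≠ 0).card ≤ S.card := by
  have hne : ∀ᵐ W ∂μ, ∀ k : Fin d, (∃ j ∈ S, L j k ≠ 0) →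
      W.mulVec (fun j => if j ∈ S then L j k else 0) ≠ 0 := by
    refine ae_all_iff.2 fun k => ?_
    by_cases hk : ∃ j ∈ S, L j k ≠ 0
    · have h0 := hvar (fun j => if j ∈ S then L j k else 0) ?_ ?_
      · have h1 : ∀ᵐ W ∂μ, ¬ W.mulVec (fun j => if j ∈ S then L j k else 0) = 0 := by
          rw [ae_iff]
          simpa only [not_not] using h0
        filter_upwards [h1] with W hW _
        exact hW
      · obtain ⟨j, hj, hjk⟩ := hk
        intro h
        exact hjk (by simpa [hj] using congrFun h j)
      · intro j hj
        by_contra hjS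
        have : j ∉ S := hjS
        simp [this] at hj
    · exact Filter.Eventually.of_forall fun W h => absurd h hk
  obtain ⟨W, hW1, hW2, hW3⟩ := (hsupp.and (hne.and hsparse)).exists
  calc _ ≤ matrixL20 (W * L) := by
        refine Finset.card_le_card fun k hk => ?_
        simp only [Finset.mem_filter, Finset.mem_univ, true_and] at hk ⊢
        obtain ⟨i, hi⟩ := Function.ne_iff.1 (hW2 k hk)
        refine ⟨i, ?_⟩
        -- Columns of `W` outside `S` vanish, so restricting `L_{:,k}` to `S` changes nothing.
        have : (W * L) i k = W.mulVec (fun j => if j ∈ S then L j k else 0) i := by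
          simp only [Matrix.mul_apply, Matrix.mulVec, dotProduct]
          refine Finset.sum_congr rfl fun j _ => ?_
          by_cases hj : j ∈ S
          · simp [hj]
          · simp [hj, hW1 j hj i]
        rw [this]
        exact hi
    _ ≤ matrixL20 W := hW3
    _ ≤ S.card := by
        refine Finset.card_le_card fun j hj => ?_
        simp only [Finset.mem_filter, Finset.mem_univ, true_and] at hj
        obtain ⟨i, hi⟩ := hj
        by_contra hjS
        exact hi (hW1 j hjS i)

/-- identifiability core of Theorem 1, "GTE via sparsity":
Let `L ∈ ℝ^{d×d}` be invertible and `𝒮` a family of subsets of `{1,…,d}` satisfying the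
non-trivial feature condition. Suppose that for each `S ∈ 𝒮` there is a probability measure
`μ S` on `m × d` real matrices such that (i) almost every `W` has all columns outside `S`
equal to zero, (ii) for every nonzero `u` with support contained in `S`,
`μ S {W | W u = 0} = 0`, and (iii) almost surely `‖W * L‖_{2,0} ≤ ‖W‖_{2,0}`.
Then `L` is a scaled permutation matrix: `L = Λ * P` with `Λ` invertible diagonal and `P`
a permutation matrix. -/
theorem scaled_perm_of_sparsity_preserving {d m : ℕ}
    (hd : 1 ≤ d) (hm : 1 ≤ m)
    (L : Matrix (Fin d) (Fin d) ℝ) (hL : IsUnit L)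
    (𝒮 : Set (Finset (Fin d)))
    (hcover : ∀ j : Fin d,
      (⋃ S ∈ {S : Finset (Fin d) | S ∈ 𝒮 ∧ j ∉ S}, (S : Set (Fin d))) = {j}ᶜ)
    (μ : Finset (Fin d) → Measure (Matrix (Fin m) (Fin d) ℝ))
    (hprob : ∀ S ∈ 𝒮, IsProbabilityMeasure (μ S))
    (hsupp : ∀ S ∈ 𝒮, ∀ᵐ W ∂μ S, ∀ j ∉ S, ∀ i : Fin m, W i j = 0)
    (hvar : ∀ S ∈ 𝒮, ∀ u : Fin d → ℝ, u ≠ 0 → Function.support u ⊆ ↑S →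
      μ S {W : Matrix (Fin m) (Fin d) ℝ | W.mulVec u = 0} = 0)
    (hsparse : ∀ S ∈ 𝒮, ∀ᵐ W ∂μ S, matrixL20 (W * L) ≤ matrixL20 W) :
    ∃ (Λ : Matrix (Fin d) (Fin d) ℝ) (σ : Equiv.Perm (Fin d)),
      Λ.IsDiag ∧ IsUnit Λ ∧ L = Λ * σ.permMatrix ℝ := by
  obtain ⟨σ, hσ⟩ := exists_perm_ne_zero L hL
  have hzero : ∀ j k, σ j ≠ k → L j k = 0 := by
    intro j k hjk
    by_contra hne
    have hj : j ∈ ({σ.symm k}ᶜ : Set (Fin d)) := by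
      rintro rfl
      simp at hjk
    rw [← hcover] at hj
    simp only [Set.mem_ofPred_eq, Set.mem_iUnion, Finset.mem_coe, exists_prop] at hj
    obtain ⟨S, ⟨hS, hkS⟩, hjS⟩ := hj
    have := hprob S hS
    have hcard := card_touched_le L S (μ S) (hsupp S hS) (hvar S hS) (hsparse S hS)
    have hsub : S.map σ.toEmbedding ⊆
        Finset.univ.filter fun k : Fin d => ∃ j ∈ S, L j k ≠ 0 := by
      intro l hl
      obtain ⟨i, hi, rfl⟩ := Finset.mem_map.1 hl
      exact Finset.mem_filter.2 ⟨Finset.mem_univ _, i, hi, hσ i⟩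
    have heq := Finset.eq_of_subset_of_card_le hsub (by rwa [Finset.card_map])
    have hk : k ∈ S.map σ.toEmbedding := by
      rw [heq]
      exact Finset.mem_filter.2 ⟨Finset.mem_univ _, j, hjS, hne⟩
    obtain ⟨i, hi, rfl⟩ := Finset.mem_map.1 hk
    exact hkS (by simpa using hi)
  refine ⟨Matrix.diagonal fun j => L j (σ j), σ, Matrix.isDiag_diagonal _, ?_, ?_⟩
  · rw [Matrix.isUnit_iff_isUnit_det, Matrix.det_diagonal]
    exact (Finset.prod_ne_zero_iff.2 fun j _ => hσ j).isUnit
  · ext j k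
    rw [Matrix.diagonal_mul, Equiv.Perm.permMatrix, PEquiv.toMatrix_apply]
    by_cases h : σ j = k
    · subst h
      simp
    · simp [h, hzero j k h]
end

section
/- Let L ∈ ℝ^{d×d} be an invertible matrix and for each i ∈ D = {1,…,d} let R_i = {j ∈ D : L_{ij} ≠ 0} denote the support of the i-th row of L. Let 𝒮 be a family of subsets of D satisfying the non-trivial feature condition: for every j ∈ D, ⋃_{S∈𝒮, j∉S} S = D \ {j}. If |⋃_{i∈S} R_i| ≤ |S| for every S ∈ 𝒮, then every row and every column of L contains exactly one nonzero entry; equivalently, L = ΛP for some invertible diagonal matrix Λ and permutation matrix P. -/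
/-!
Since `det L ≠ 0`, some term of the Leibniz expansion is nonzero, which gives a permutation `σ`
with `L i (σ i) ≠ 0` for all `i` (`exists_perm_forall_apply_ne_zero`). For `S ∈ 𝒮` the columns
occupied by the rows in `S` include `σ(S)` and number at most `|S|`, so they are exactly `σ(S)`.
If `L i (σ k) ≠ 0` with `k ≠ i`, the covering condition at `k` provides `S ∈ 𝒮` with `i ∈ S` and
`k ∉ S`; then `σ k ∈ σ(S)`, a contradiction. Hence the nonzero entries of `L` are exactly the
`L i (σ i)`.
-/

open scoped Classical

/-- An invertible matrix has a transversal of nonzero entries: a nonvanishing term of the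
Leibniz expansion of its determinant. -/
lemma exists_perm_forall_apply_ne_zero {d : ℕ} (L : Matrix (Fin d) (Fin d) ℝ) (hL : IsUnit L) :
    ∃ σ : Equiv.Perm (Fin d), ∀ i, L i (σ i) ≠ 0 := by
  have hdet : L.det ≠ 0 := ((Matrix.isUnit_iff_isUnit_det L).1 hL).ne_zero
  rw [Matrix.det_apply] at hdet
  obtain ⟨τ, -, hτ⟩ := Finset.exists_ne_zero_of_sum_ne_zero hdet
  have hprod : ∏ i, L (τ i) i ≠ 0 := fun h => hτ (by rw [h, smul_zero])
  -- The Leibniz formula indexes by columns; inverting `τ` gives a transversal indexed by rows.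
  refine ⟨τ.symm, fun i => ?_⟩
  simpa using Finset.prod_ne_zero_iff.1 hprod (τ.symm i) (Finset.mem_univ _)

/-- Let `L` be an invertible `d × d` real matrix with row supports
`R i = {j | L i j ≠ 0}`, and let `𝒮` be a family of subsets of `{1,…,d}` satisfying the
non-trivial feature condition: for every feature `j`, the supports in `𝒮` not containing `j`
jointly cover all other features. If for every `S ∈ 𝒮` the rows of `L` indexed by `S` occupy
at most `|S|` columns, then every row and every column of `L` contains exactly one nonzero
entry; equivalently, `L = Λ * P` for an invertible diagonal matrix `Λ` and a permutation
matrix `P`. -/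
theorem scaled_perm_of_sparse_rows {d : ℕ}
    (L : Matrix (Fin d) (Fin d) ℝ) (hL : IsUnit L)
    (R : Fin d → Finset (Fin d))
    (hR : ∀ i, R i = Finset.univ.filter fun j => L i j ≠ 0)
    (𝒮 : Set (Finset (Fin d)))
    (hcover : ∀ j : Fin d,
      (⋃ S ∈ {S : Finset (Fin d) | S ∈ 𝒮 ∧ j ∉ S}, (S : Set (Fin d))) = {j}ᶜ)
    (hsparse : ∀ S ∈ 𝒮, (S.biUnion R).card ≤ S.card) :
    ((∀ i : Fin d, ∃! j : Fin d, L i j ≠ 0) ∧ (∀ j : Fin d, ∃! i : Fin d, L i j ≠ 0)) ∧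
      ∃ (Λ : Matrix (Fin d) (Fin d) ℝ) (σ : Equiv.Perm (Fin d)),
        Λ.IsDiag ∧ IsUnit Λ ∧ L = Λ * σ.permMatrix ℝ := by
  obtain ⟨σ, hσ⟩ := exists_perm_forall_apply_ne_zero L hL
  have hmem : ∀ i j, j ∈ R i ↔ L i j ≠ 0 := fun i j => by simp [hR]
  -- On `S ∈ 𝒮` the transversal fills the whole column budget, so the occupied columns are `σ(S)`.
  have himage : ∀ S ∈ 𝒮, S.image σ = S.biUnion R := fun S hS => by
    refine Finset.eq_of_subset_of_card_le (fun j hj => ?_) ?_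
    · obtain ⟨i, hi, rfl⟩ := Finset.mem_image.1 hj
      exact Finset.mem_biUnion.2 ⟨i, hi, (hmem i _).2 (hσ i)⟩
    · rw [Finset.card_image_of_injective _ σ.injective]
      exact hsparse S hS
  have hsupp : ∀ i j, L i j ≠ 0 → j = σ i := fun i j hij => by
    obtain ⟨k, rfl⟩ := σ.surjective j
    by_contra hne
    -- The covering condition separates `i` from `k` by some `S ∈ 𝒮` with `i ∈ S` and `k ∉ S`.
    have hi : i ∈ ({k}ᶜ : Set (Fin d)) := by
      rintro rfl
      exact hne rfl
    rw [← hcover k] at hi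
    obtain ⟨S, ⟨hS, hkS⟩, hiS⟩ := Set.mem_iUnion₂.1 hi
    have hk : σ k ∈ S.image σ := by
      rw [himage S hS]
      exact Finset.mem_biUnion.2 ⟨i, hiS, (hmem i _).2 hij⟩
    obtain ⟨l, hl, hlk⟩ := Finset.mem_image.1 hk
    exact hkS (σ.injective hlk ▸ hl)
  refine ⟨⟨fun i => ⟨σ i, hσ i, fun j hj => hsupp i j hj⟩, fun j => ⟨σ.symm j, ?_, ?_⟩⟩,
    Matrix.diagonal fun i => L i (σ i), σ, Matrix.isDiag_diagonal _, ?_, ?_⟩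
  · simpa using hσ (σ.symm j)
  · intro i hi
    simp [hsupp i j hi]
  · rw [Matrix.isUnit_iff_isUnit_det, Matrix.det_diagonal, isUnit_iff_ne_zero]
    exact Finset.prod_ne_zero_iff.2 fun i _ => hσ i
  · ext i j
    rw [Matrix.diagonal_mul, Equiv.Perm.permMatrix, PEquiv.toMatrix_apply]
    by_cases h : σ i = j
    · simp [h]
    · have h0 : L i j = 0 := by
        by_contra hij
        exact h (hsupp i j hij).symm
      simp [h, h0]
end
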